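/- Let M be a finite monoid and A a finite alphabet with a morphism φ : A* → M, and let # map idempotents of M to idempotents satisfying (E#)# = E# and E·E# = E#·E = E#. Suppose idempotent iteration strictly decreases the J-class whenever E# ≠ E. Then for every word w ∈ A* and every k > 3 there exists a k-decomposition tree for w with respect to M of height at most 3·|M|². -/

import Mathlib

inductive DTree (A M : Type*) : Type _
  | leaf (a : A)
  | prod (l r : DTree A M)
  | idem (E : M) (children : List (DTree A M))
  | iter (E : M) (children : List (DTree A M))

namespace DTree

mutual
def word {A M : Type*} : DTree A M → List A
  | leaf a => [a]
  | prod l r => word l ++ word r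
  | idem _ cs => wordList cs
  | iter _ cs => wordList cs

def wordList {A M : Type*} : List (DTree A M) → List A
  | [] => []
  | c :: cs => word c ++ wordList cs
end

mutual
def height {A M : Type*} : DTree A M → ℕ
  | leaf _ => 1
  | prod l r => max (height l) (height r) + 1
  | idem _ cs => heightList cs + 1
  | iter _ cs => heightList cs + 1

def heightList {A M : Type*} : List (DTree A M) → ℕ
  | [] => 0
  | c :: cs => max (height c) (heightList cs)
end

def typ {A M : Type*} [Monoid M] (φ : A → M) (sharp : M → M) : DTree A M → M
  | leaf a => φ a
  | prod l r => typ φ sharp l * typ φ sharp r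
  | idem E _ => E
  | iter E _ => sharp E

inductive Valid {A M : Type*} [Monoid M] (φ : A → M) (sharp : M → M) (k : ℕ) :
    DTree A M → Prop
  | leaf (a : A) : Valid φ sharp k (DTree.leaf a)
  | prod {l r : DTree A M} : Valid φ sharp k l → Valid φ sharp k r →
      Valid φ sharp k (DTree.prod l r)
  | idem {E : M} {cs : List (DTree A M)} : cs ≠ [] → cs.length < k →
      E * E = E → (∀ c ∈ cs, Valid φ sharp k c) → (∀ c ∈ cs, typ φ sharp c = E) →
      Valid φ sharp k (DTree.idem E cs)
  | iter {E : M} {cs : List (DTree A M)} : k ≤ cs.length →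
      E * E = E → (∀ c ∈ cs, Valid φ sharp k c) → (∀ c ∈ cs, typ φ sharp c = E) →
      Valid φ sharp k (DTree.iter E cs)

end DTree

/-!
The proof applies a weighted version of Simon's theorem to words whose letters are themselves
decomposition trees. Call a tree of type `x` light if its height is at most `3 * jDepth x`, where
`jDepth x` is the number of elements strictly `J`-above `x` (or at most `1`, so that leaves are
light), and write `w` as a concatenation of as few light trees as possible. The weighted theorem
combines these trees at total height `3 * jRank x ≤ 3 * |M|`, where `jRank x` is the number of
elements `J`-above `x`, using an idempotent node of type `E` only at height at most `3 * jRank E`.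
If such a node has `k` or more children it becomes an iteration node. Were `E# ≠ E`, then
`jRank E ≤ jDepth E#`, so the iteration node would be light and would replace several trees of the
list by a single one, contradicting minimality. Hence `E# = E` and no type changes.

The weighted theorem goes by induction on the `J`-class of the type `x` of the word. Cut the word
greedily into blocks of type in the `J`-class of `x`, with a remainder of type strictly above.
Label a block of type `y` preceded by a prefix of type `p` by an element of the `J`-class that
determines `p` and the `R`-class of `y`. All factors between two blocks with the same label have
the same idempotent type. Cutting at all blocks with a given label therefore eliminates
the label at the cost of one idempotent node and two products, that is, of height `3`.
-/

/-! ### Green's relations -/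

section Green

variable {M : Type*} [Monoid M] {x y z e p m m' : M}

/-- Green's preorder `≤_J`: `x` lies in the two-sided ideal generated by `y`. -/
def JLE (x y : M) : Prop := ∃ m m', x = m * y * m'

/-- The strict part `<_J` of Green's preorder, which idempotent iteration has to respect. -/
def JLT (x y : M) : Prop := JLE x y ∧ ¬ JLE y x

/-- Green's equivalence relation `J`, the symmetric part of `≤_J`. -/
def JEquiv (x y : M) : Prop := JLE x y ∧ JLE y x

theorem JLE.refl (x : M) : JLE x x := ⟨1, 1, by simp⟩

theorem JLE.trans (hxy : JLE x y) (hyz : JLE y z) : JLE x z := by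
  obtain ⟨a, a', rfl⟩ := hxy
  obtain ⟨b, b', rfl⟩ := hyz
  exact ⟨a * b, b' * a', by simp only [mul_assoc]⟩

theorem JEquiv.trans (hxy : JEquiv x y) (hyz : JEquiv y z) : JEquiv x z :=
  ⟨hxy.1.trans hyz.1, hyz.2.trans hxy.2⟩

theorem mul_jle_left (x y : M) : JLE (x * y) x := ⟨1, y, by simp⟩

theorem mul_jle_right (x y : M) : JLE (x * y) y := ⟨x, 1, by simp⟩

theorem jle_of_dvd (h : x ∣ y) : JLE y x := by
  obtain ⟨c, rfl⟩ := h
  exact mul_jle_left x c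

theorem jlt_of_ideal_ssubset
    (h : {z : M | ∃ m m' : M, z = m * x * m'} ⊂ {z : M | ∃ m m' : M, z = m * y * m'}) :
    JLT x y :=
  ⟨h.1 (JLE.refl x), fun hyx => h.2 fun _ hz => JLE.trans hz hyx⟩

theorem exists_pow_succ_mul_eq [Finite M] {u a b : M} (h : u = a * u * b) :
    ∃ n : ℕ, a ^ (n + 1) * u = u := by
  have iterate (n : ℕ) : u = a ^ n * u * b ^ n := by
    induction n with
    | zero => simp
    | succ n ih =>
      calc u = a ^ n * (a * u * b) * b ^ n := by rw [← h, ← ih]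
        _ = a ^ (n + 1) * u * b ^ (n + 1) := by simp only [pow_succ a, pow_succ' b, mul_assoc]
  obtain ⟨i, j, hij, hpow⟩ : ∃ i j : ℕ, i < j ∧ a ^ i = a ^ j := by
    by_contra! hne
    exact not_injective_infinite_finite (a ^ ·) (Function.Injective.of_lt_imp_ne hne)
  obtain ⟨n, rfl⟩ := Nat.exists_eq_add_of_lt hij
  refine ⟨n, ?_⟩
  calc a ^ (n + 1) * u = a ^ (n + 1) * (a ^ i * u * b ^ i) := by rw [← iterate i]
    _ = a ^ (i + n + 1) * u * b ^ i := by
      rw [add_assoc, add_comm i, pow_add _ (n + 1) i]; simp only [mul_assoc]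
    _ = u := by rw [← hpow, ← iterate i]

theorem JLE.exists_mul_mul_eq [Finite M] (h : JLE x (y * x)) : ∃ c, c * (y * x) = x := by
  obtain ⟨a, b, hab⟩ := h
  obtain ⟨n, hn⟩ := exists_pow_succ_mul_eq (u := x) (a := a * y) (b := b)
    (by simpa only [mul_assoc] using hab)
  exact ⟨(a * y) ^ n * a, by rwa [pow_succ, mul_assoc, mul_assoc, ← mul_assoc _ a] at hn⟩

theorem JLE.mul_dvd [Finite M] (h : JLE x (x * y)) : x * y ∣ x := by
  have : Finite Mᵐᵒᵖ := Finite.of_equiv M MulOpposite.opEquiv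
  obtain ⟨a, b, hab⟩ := h
  obtain ⟨c, hc⟩ := JLE.exists_mul_mul_eq (x := MulOpposite.op x) (y := MulOpposite.op y)
    ⟨MulOpposite.op b, MulOpposite.op a, congrArg MulOpposite.op (hab.trans (mul_assoc _ _ _))⟩
  exact ⟨c.unop, (congrArg MulOpposite.unop hc).symm⟩

theorem JLE.dvd_of_dvd [Finite M] (h : JLE x y) (hxy : x ∣ y) : y ∣ x := by
  obtain ⟨c, rfl⟩ := hxy
  exact h.mul_dvd

theorem exists_isIdempotentElem_mul_eq [Finite M] (hx : JLE x (x * y)) (hy : JLE y x) :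
    ∃ e, IsIdempotentElem e ∧ x ∣ e ∧ e * x = x := by
  obtain ⟨t, ht⟩ := hx.mul_dvd
  obtain ⟨a, b, rfl⟩ := hy
  obtain ⟨n, hn⟩ := exists_pow_succ_mul_eq (u := x) (a := x * a) (b := b * t)
    (by simpa only [mul_assoc] using ht)
  have x_dvd : x ∣ (x * a) ^ (n + 1) := (dvd_mul_right x a).trans (dvd_pow_self _ n.succ_ne_zero)
  refine ⟨_, ?_, x_dvd, hn⟩
  obtain ⟨c, hc⟩ := x_dvd
  calc (x * a) ^ (n + 1) * (x * a) ^ (n + 1) = (x * a) ^ (n + 1) * x * c := by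
        rw [mul_assoc, ← hc]
    _ = (x * a) ^ (n + 1) := by rw [hn, hc]

theorem mul_eq_left_of_stabilizer [Finite M] (hm : p * m = p) (hJ : JLE m p)
    (hm' : p * m' = p) : m * m' = m := by
  obtain ⟨c, hc⟩ := JLE.exists_mul_mul_eq (x := m) (y := p) (by rwa [hm])
  rw [hm] at hc
  rw [← hc, mul_assoc, hm']

theorem eq_of_dvd_of_stabilizer [Finite M] (hm : p * m = p) (hJ : JLE m p)
    (hm' : p * m' = p) (h : m ∣ m') : m = m' := by
  obtain ⟨c, rfl⟩ := h
  calc m = m * (m * c) := (mul_eq_left_of_stabilizer hm hJ hm').symm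
    _ = m * c := by rw [← mul_assoc, mul_eq_left_of_stabilizer hm hJ hm]

theorem JEquiv.exists_left_translation [Finite M] (h : JEquiv e x) :
    ∃ c d, ∀ p, e ∣ p → d * (c * p) = p ∧ x ∣ c * p := by
  obtain ⟨⟨a, b, he⟩, hxe⟩ := h
  rw [mul_assoc] at he
  obtain ⟨c, hc⟩ := JLE.exists_mul_mul_eq (x := x * b) (y := a)
    (he ▸ (mul_jle_left x b).trans hxe)
  rw [← he] at hc
  refine ⟨c, a, ?_⟩
  rintro _ ⟨q, rfl⟩
  rw [← mul_assoc c, hc]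
  exact ⟨by rw [← mul_assoc, ← he], (dvd_mul_right x b).mul_right q⟩

theorem exists_dvd_class_representative (M : Type*) [Monoid M] :
    ∃ r : M → M, (∀ x, x ∣ r x ∧ r x ∣ x) ∧ ∀ x y, x ∣ y → y ∣ x → r x = r y := by
  let multiples (x : M) : Set M := {y | x ∣ y}
  have hr (x : M) : multiples (Function.invFun multiples (multiples x)) = multiples x :=
    Function.invFun_eq ⟨x, rfl⟩
  refine ⟨fun x => Function.invFun multiples (multiples x), fun x => ⟨?_, ?_⟩,
    fun x y hxy hyx => ?_⟩
  · exact (hr x).subset (dvd_refl _)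
  · exact (hr x).superset (dvd_refl x)
  · have : multiples x = multiples y :=
      Set.ext fun z => ⟨fun hz => hyx.trans hz, fun hz => hxy.trans hz⟩
    simp only [this]

/-- `label` numbers the pairs `(p, x)`, where `p` is `R`-equivalent to `e` and `x` is
`J`-equivalent to `e`, by elements of the `J`-class of `e`, so that the label of `(p, x)` determines
`p` and the `R`-class of `x`. -/
structure IsLabelling (e : M) (label : M → M → M) : Prop where
  jEquiv {p x : M} : e ∣ p → JLE e p → JEquiv e x → JEquiv e (label p x)
  eq_and_dvd {p x p' x' : M} : e ∣ p → JLE e p → JEquiv e x → e ∣ p' → JLE e p' → JEquiv e x' →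
    label p x = label p' x' → p = p' ∧ x ∣ x'

theorem exists_isLabelling [Finite M] (e : M) : ∃ label : M → M → M, IsLabelling e label := by
  obtain ⟨r, hr, hr_eq⟩ := exists_dvd_class_representative M
  have r_equiv {x : M} (hx : JEquiv e x) : JEquiv e (r x) :=
    ⟨hx.1.trans (jle_of_dvd (hr x).2), (jle_of_dvd (hr x).1).trans hx.2⟩
  choose! c d hdc hdvd using fun x (hx : JEquiv e x) => hx.exists_left_translation
  have label_equiv {p x : M} (hp : e ∣ p) (hep : JLE e p) (hx : JEquiv e x) :
      JEquiv e (c (r x) * p) :=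
    ⟨hep.trans ⟨d (r x), 1, by rw [hdc _ (r_equiv hx) p hp, mul_one]⟩,
      (mul_jle_right _ p).trans (jle_of_dvd hp)⟩
  have label_dvd {p x : M} (hp : e ∣ p) (hep : JLE e p) (hx : JEquiv e x) :
      x ∣ c (r x) * p ∧ c (r x) * p ∣ x := by
    have x_dvd : x ∣ c (r x) * p := (hr x).1.trans (hdvd _ (r_equiv hx) p hp)
    exact ⟨x_dvd, (hx.2.trans (label_equiv hp hep hx).1).dvd_of_dvd x_dvd⟩
  -- The label `c (r x) * p` lies in the `L`-class of `p` and in the `R`-class of `x`.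
  refine ⟨fun p x => c (r x) * p, label_equiv, ?_⟩
  intro p x p' x' hp hep hx hp' hep' hx' (heq : c (r x) * p = c (r x') * p')
  obtain ⟨x_dvd, dvd_x⟩ := label_dvd hp hep hx
  obtain ⟨x'_dvd, dvd_x'⟩ := label_dvd hp' hep' hx'
  have hxx' : x ∣ x' := (heq ▸ x_dvd).trans dvd_x'
  have hx'x : x' ∣ x := (heq ▸ x'_dvd).trans dvd_x
  simp only [← hr_eq x x' hxx' hx'x] at heq
  exact ⟨by rw [← hdc _ (r_equiv hx) p hp, heq, hdc _ (r_equiv hx) p' hp'], hxx'⟩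

/-- The number of elements that are `≥_J x` (`0` if there are infinitely many). One third of the
height allowed for a word of type `x`. -/
noncomputable def jRank (x : M) : ℕ := {y | JLE x y}.ncard

/-- The number of elements that are `>_J x` (`0` if there are infinitely many). One third of the
height allowed for a tree of type `x` that is used as a leaf. -/
noncomputable def jDepth (x : M) : ℕ := {y | JLT x y}.ncard

theorem jRank_eq_jDepth_add [Finite M] (x : M) :
    jRank x = jDepth x + {y | JEquiv x y}.ncard := by
  have hdisj : Disjoint {y | JLT x y} {y | JEquiv x y} :=
    Set.disjoint_left.2 fun y hlt heq => hlt.2 heq.2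
  rw [jRank, jDepth, ← Set.ncard_union_eq hdisj]
  congr 1
  ext y
  simp only [JLT, JEquiv, Set.mem_ofPred_eq, Set.mem_union]
  tauto

theorem jDepth_lt_jRank [Finite M] (x : M) : jDepth x < jRank x := by
  rw [jRank_eq_jDepth_add]
  exact Nat.lt_add_of_pos_right ((Set.ncard_pos (Set.toFinite _)).2 ⟨x, JLE.refl x, JLE.refl x⟩)

theorem jRank_le_jRank_of_jle [Finite M] (h : JLE x y) : jRank y ≤ jRank x :=
  Set.ncard_le_ncard fun _ hz => h.trans hz

theorem jRank_le_jDepth_of_jlt [Finite M] (h : JLT x y) : jRank y ≤ jDepth x :=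
  Set.ncard_le_ncard fun _ hz => ⟨h.1.trans hz, fun hzx => h.2 (JLE.trans hz hzx)⟩

theorem jDepth_le_jDepth_of_jle [Finite M] (h : JLE x y) : jDepth y ≤ jDepth x :=
  Set.ncard_le_ncard fun _ hz => ⟨h.trans hz.1, fun hzx => hz.2 (hzx.trans h)⟩

theorem jRank_le_card [Finite M] (x : M) : jRank x ≤ Nat.card M :=
  Set.ncard_le_card _

end Green

/-! ### Weighted factorization forests -/

section Ramseyan

variable {A M : Type*} [Monoid M] {φ : A → M}

/-- The image of a word under the monoid morphism `A* → M` extending `φ`. -/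
def wordType (φ : A → M) (w : List A) : M := (w.map φ).prod

theorem wordType_append (u v : List A) : wordType φ (u ++ v) = wordType φ u * wordType φ v := by
  simp [wordType]

theorem wordType_flatten_of_isIdempotentElem {e : M} {us : List (List A)}
    (he : IsIdempotentElem e) (hne : us ≠ []) (hus : ∀ u ∈ us, wordType φ u = e) :
    wordType φ us.flatten = e := by
  induction us with
  | nil => exact absurd rfl hne
  | cons u us ih =>
    rw [List.flatten_cons, wordType_append, hus u List.mem_cons_self]
    rcases eq_or_ne us [] with rfl | hus_ne
    · simp [wordType]
    · rw [ih hus_ne fun v hv => hus v (List.mem_cons_of_mem u hv), he.eq]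

/-- `Ramseyan φ h w` says that `w` has a Ramseyan decomposition tree of height at most `h`, where
a leaf labelled `a` has height `max 1 (3 * jDepth (φ a))` instead of `1`, and an idempotent node of
type `e` may only occur at height at most `3 * jRank e`. -/
inductive Ramseyan (φ : A → M) : ℕ → List A → Prop
  | letter (a : A) : Ramseyan φ (max 1 (3 * jDepth (φ a))) [a]
  | mul {h : ℕ} {u v : List A} : Ramseyan φ h u → Ramseyan φ h v → Ramseyan φ (h + 1) (u ++ v)
  | idem {h : ℕ} {e : M} {us : List (List A)} : IsIdempotentElem e → h + 1 ≤ 3 * jRank e →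
      us ≠ [] → (∀ u ∈ us, Ramseyan φ h u) → (∀ u ∈ us, wordType φ u = e) →
      Ramseyan φ (h + 1) us.flatten
  | mono {h h' : ℕ} {w : List A} : h ≤ h' → Ramseyan φ h w → Ramseyan φ h' w

namespace Ramseyan

theorem ne_nil {h : ℕ} {w : List A} (hw : Ramseyan φ h w) : w ≠ [] := by
  induction hw with
  | letter a => simp
  | mul _ _ ihu _ => simp [ihu]
  | @idem _ _ us _ _ hne _ _ ih =>
    obtain ⟨u, hu⟩ := List.exists_mem_of_ne_nil us hne
    exact fun h => ih u hu (List.flatten_eq_nil_iff.1 h u hu)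
  | mono _ _ ih => exact ih

theorem append_eq_nil_or {h : ℕ} {u v : List A} (hu : u = [] ∨ Ramseyan φ h u)
    (hv : v = [] ∨ Ramseyan φ h v) : u ++ v = [] ∨ Ramseyan φ (h + 1) (u ++ v) := by
  rcases hu with rfl | hu
  · exact hv.imp_right fun hv => hv.mono h.le_succ
  rcases hv with rfl | hv
  · simpa only [List.append_nil] using .inr (hu.mono h.le_succ)
  · exact .inr (hu.mul hv)

end Ramseyan

theorem exists_eq_append_flatten_chunks {α : Type*} (p : α → Prop) (l : List α) :
    ∃ (f : List α) (Ns : List (List α)), l = f ++ Ns.flatten ∧ (∀ x ∈ f, ¬ p x) ∧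
      ∀ N ∈ Ns, ∃ a t, N = a :: t ∧ p a ∧ ∀ x ∈ t, ¬ p x := by
  induction l with
  | nil => exact ⟨[], [], by simp⟩
  | cons a l ih =>
    obtain ⟨f, Ns, rfl, hf, hNs⟩ := ih
    by_cases ha : p a
    · refine ⟨[], (a :: f) :: Ns, by simp, by simp, ?_⟩
      rintro N (_ | ⟨_, hN⟩)
      exacts [⟨a, f, rfl, ha, hf⟩, hNs N hN]
    · exact ⟨a :: f, Ns, rfl, List.forall_mem_cons.2 ⟨ha, hf⟩, hNs⟩

section Coherent

variable {S : Type*} {h H : ℕ} {L L' : List (S × List A)}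

/-- A list of labelled words is coherent if, for each label `σ`, all factors leading from one
occurrence of `σ` to another have the same type, and this type is an idempotent that is allowed at
idempotent nodes up to height `H`. -/
def Coherent (φ : A → M) (H : ℕ) (L : List (S × List A)) : Prop :=
  ∀ σ, ∃ e, IsIdempotentElem e ∧ H ≤ 3 * jRank e ∧ ∀ b G b',
    ((σ, b) :: (G ++ [(σ, b')])) <:+: L → wordType φ (((σ, b) :: G).flatMap Prod.snd) = e

theorem Coherent.of_infix (hL : Coherent φ H L) (h : L' <:+: L) : Coherent φ H L' := fun σ =>
  let ⟨e, he, hH, htype⟩ := hL σ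
  ⟨e, he, hH, fun b G b' hinf => htype b G b' (hinf.trans h)⟩

theorem Coherent.ramseyan_chunks {σ : S} {b : List A} {G : List (S × List A)}
    {Ns : List (List (S × List A))} (hL : Coherent φ H (Ns.flatten ++ (σ, b) :: G))
    (hstart : ∀ N ∈ Ns, ∃ c t, N = (σ, c) :: t)
    (hNs : ∀ N ∈ Ns, Ramseyan φ h (N.flatMap Prod.snd)) (hH : h + 1 ≤ H) :
    Ns.flatten.flatMap Prod.snd = [] ∨ Ramseyan φ (h + 1) (Ns.flatten.flatMap Prod.snd) := by
  rcases eq_or_ne Ns [] with rfl | hne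
  · exact .inl rfl
  obtain ⟨e, he, heH, htype⟩ := hL σ
  have flatMap_flatten :
      Ns.flatten.flatMap Prod.snd = (Ns.map fun N => N.flatMap Prod.snd).flatten := by
    rw [← List.flatMap_id', List.flatMap_assoc, List.flatMap_def]
  rw [flatMap_flatten]
  refine .inr (.idem he (hH.trans heH) (by simpa using hne) (by simpa using hNs) ?_)
  simp only [List.mem_map, forall_exists_index, and_imp, forall_apply_eq_imp_iff₂]
  intro N hN
  obtain ⟨P, Q, rfl⟩ := List.append_of_mem hN
  obtain ⟨c, t, rfl⟩ := hstart N hN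
  obtain ⟨c', t', next_eq⟩ : ∃ c' t', Q.flatten ++ (σ, b) :: G = (σ, c') :: t' := by
    cases Q with
    | nil => exact ⟨b, G, rfl⟩
    | cons N' Q =>
      obtain ⟨c', t', rfl⟩ := hstart N' (by simp)
      exact ⟨c', t' ++ Q.flatten ++ (σ, b) :: G, by simp⟩
  exact htype c t c' ⟨P.flatten, t', by simp [next_eq]⟩

theorem Coherent.exists_ramseyan_split (hL : Coherent φ H L) (σ : S)
    (hpart : ∀ y t, y :: t <:+: L → (∀ z ∈ t, z.1 ≠ σ) →
      Ramseyan φ h ((y :: t).flatMap Prod.snd)) (hH : h + 1 ≤ H) :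
    ∃ u v w, L.flatMap Prod.snd = u ++ (v ++ w) ∧
      (u = [] ∨ Ramseyan φ h u ∧ ∀ x ∈ L.head?, x.1 ≠ σ) ∧
      (v = [] ∨ Ramseyan φ (h + 1) v) ∧ (w = [] ∨ Ramseyan φ h w) := by
  obtain ⟨f, Ns, rfl, hf, hNs⟩ := exists_eq_append_flatten_chunks (fun y => y.1 = σ) L
  have hu : f.flatMap Prod.snd = [] ∨ Ramseyan φ h (f.flatMap Prod.snd) ∧
      ∀ x ∈ (f ++ Ns.flatten).head?, x.1 ≠ σ := by
    cases f with
    | nil => exact .inl rfl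
    | cons y t =>
      rw [List.forall_mem_cons] at hf
      exact .inr ⟨hpart y t (List.prefix_append _ _).isInfix hf.2, by simpa using hf.1⟩
  have hchunk (N : List (S × List A)) (hN : N ∈ Ns) :
      (∃ c t, N = (σ, c) :: t) ∧ Ramseyan φ h (N.flatMap Prod.snd) := by
    obtain ⟨⟨_, c⟩, t, rfl, rfl, ht⟩ := hNs N hN
    exact ⟨⟨c, t, rfl⟩, hpart _ t
      ((List.infix_of_mem_flatten hN).trans (List.suffix_append f _).isInfix) ht⟩
  rcases List.eq_nil_or_concat' Ns with rfl | ⟨Ns, N, rfl⟩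
  · exact ⟨f.flatMap Prod.snd, [], [], by simp, hu, .inl rfl, .inl rfl⟩
  obtain ⟨⟨b, G, rfl⟩, hw⟩ := hchunk N (by simp)
  refine ⟨f.flatMap Prod.snd, Ns.flatten.flatMap Prod.snd, _, by simp, hu, ?_, .inr hw⟩
  have hL' : Coherent φ H (Ns.flatten ++ (σ, b) :: G) := hL.of_infix ⟨f, [], by simp⟩
  exact hL'.ramseyan_chunks (fun N hN => (hchunk N (by simp [hN])).1)
    (fun N hN => (hchunk N (by simp [hN])).2) hH

theorem Coherent.ramseyan (s : Finset S) : ∀ (x : S × List A) (L : List (S × List A)),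
    Coherent φ H (x :: L) → (∀ y ∈ x :: L, Ramseyan φ h y.2) → (∀ y ∈ L, y.1 ∈ s) →
    h + 3 * s.card ≤ H → Ramseyan φ (h + 3 * s.card) ((x :: L).flatMap Prod.snd) := by
  classical
  induction s using Finset.induction_on with
  | empty =>
    intro x L _ hR hs _
    obtain rfl : L = [] := List.eq_nil_iff_forall_not_mem.2 fun y hy => by simpa using hs y hy
    simpa using hR x
  | insert σ s hσ ih =>
    intro x L hL hR hs hH
    rw [Finset.card_insert_of_notMem hσ] at hH ⊢
    have hpart (y : S × List A) (t : List (S × List A)) (hinf : y :: t <:+: x :: L)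
        (ht : ∀ z ∈ t, z.1 ≠ σ) : Ramseyan φ (h + 3 * s.card) ((y :: t).flatMap Prod.snd) := by
      have ht_sub : t ⊆ L := hinf.sublist.tail.subset
      exact ih y t (hL.of_infix hinf) (fun z hz => hR z (hinf.subset hz))
        (fun z hz => Finset.mem_of_mem_insert_of_ne (hs z (ht_sub hz)) (ht z hz)) (by lia)
    obtain ⟨u, v, w, huvw, hu, hv, hw⟩ := hL.exists_ramseyan_split σ hpart (by lia)
    have hne : u ++ (v ++ w) ≠ [] := by
      simp [← huvw, (hR x List.mem_cons_self).ne_nil]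
    have hvw := Ramseyan.append_eq_nil_or hv (hw.imp_right fun hw => hw.mono (Nat.le_succ _))
    have huvw' := Ramseyan.append_eq_nil_or (hu.imp_right fun hu => hu.1.mono (by lia)) hvw
    exact huvw ▸ huvw'.resolve_left hne

theorem Coherent.ramseyan_append {x : S × List A} {s : Finset S} {z : List A}
    (hL : Coherent φ H (x :: L)) (hR : ∀ y ∈ x :: L, Ramseyan φ h y.2)
    (hs : ∀ y ∈ L, y.1 ≠ x.1 → y.1 ∈ s) (hH : h + 3 * s.card + 1 ≤ H)
    (hz : z = [] ∨ Ramseyan φ h z) :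
    Ramseyan φ (h + 3 * s.card + 2) ((x :: L).flatMap Prod.snd ++ z) := by
  have hpart (y : S × List A) (t : List (S × List A)) (hinf : y :: t <:+: x :: L)
      (ht : ∀ z ∈ t, z.1 ≠ x.1) : Ramseyan φ (h + 3 * s.card) ((y :: t).flatMap Prod.snd) := by
    have ht_sub : t ⊆ L := hinf.sublist.tail.subset
    exact (hL.of_infix hinf).ramseyan s y t (fun z hz => hR z (hinf.subset hz))
      (fun z hz => hs z (ht_sub hz) (ht z hz)) (by lia)
  obtain ⟨u, v, w, huvw, hu, hv, hw⟩ := hL.exists_ramseyan_split x.1 hpart hH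
  obtain rfl : u = [] := hu.resolve_right fun hu => hu.2 x rfl rfl
  have hne : v ++ (w ++ z) ≠ [] := by
    rw [← List.append_assoc, ← List.nil_append (v ++ w), ← huvw]
    simp [(hR x List.mem_cons_self).ne_nil]
  have hwz := Ramseyan.append_eq_nil_or hw (hz.imp_right fun hz => hz.mono (Nat.le_add_right _ _))
  rw [huvw, List.nil_append, List.append_assoc]
  exact (Ramseyan.append_eq_nil_or hv hwz).resolve_left hne

end Coherent

/-- The list of blocks `bs`, where a block of type `x` preceded by the blocks `F` carries the
label `label (p * wordType φ F.flatten) x`. -/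
def labelBlocks (φ : A → M) (label : M → M → M) : M → List (List A) → List (M × List A)
  | _, [] => []
  | p, b :: bs => (label p (wordType φ b), b) :: labelBlocks φ label (p * wordType φ b) bs

theorem flatMap_snd_labelBlocks (label : M → M → M) (p : M) (bs : List (List A)) :
    (labelBlocks φ label p bs).flatMap Prod.snd = bs.flatten := by
  induction bs generalizing p with
  | nil => rfl
  | cons b bs ih => simp [labelBlocks, ih]

theorem snd_mem_of_mem_labelBlocks {label : M → M → M} {p : M} {bs : List (List A)}
    {y : M × List A} (hy : y ∈ labelBlocks φ label p bs) : y.2 ∈ bs := by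
  induction bs generalizing p with
  | nil => simp [labelBlocks] at hy
  | cons b bs ih =>
    rcases List.mem_cons.1 hy with rfl | hy
    exacts [List.mem_cons_self, List.mem_cons_of_mem b (ih hy)]

theorem eq_label_of_labelBlocks_eq {label : M → M → M} {p : M} {bs : List (List A)}
    {F G : List (M × List A)} {y : M × List A} (h : labelBlocks φ label p bs = F ++ y :: G) :
    y.1 = label (p * wordType φ (F.flatMap Prod.snd)) (wordType φ y.2) := by
  induction F generalizing p bs with
  | nil =>
    cases bs with
    | nil => simp [labelBlocks] at h
    | cons b bs =>
      obtain ⟨rfl, -⟩ := List.cons_eq_cons.1 h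
      simp [wordType]
  | cons f F ih =>
    cases bs with
    | nil => simp [labelBlocks] at h
    | cons b bs =>
      obtain ⟨rfl, htail⟩ := List.cons_eq_cons.1 h
      rw [ih htail, List.flatMap_cons, wordType_append, mul_assoc]

section LabelBlocks

variable {e : M} {label : M → M → M} {bs : List (List A)}

theorem jle_mul_wordType_of_labelBlocks_eq {F G : List (M × List A)}
    (hJ : JLE e (e * wordType φ bs.flatten)) (h : labelBlocks φ label e bs = F ++ G) :
    JLE e (e * wordType φ (F.flatMap Prod.snd)) := by
  refine hJ.trans (jle_of_dvd ?_)
  rw [← flatMap_snd_labelBlocks label e, h, List.flatMap_append, wordType_append, ← mul_assoc]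
  exact dvd_mul_right _ _

theorem IsLabelling.exists_stabilized {σ : M} {b b' : List A} {G : List (M × List A)}
    (hlabel : IsLabelling e label) (hbs : ∀ b ∈ bs, JEquiv e (wordType φ b))
    (hJ : JLE e (e * wordType φ bs.flatten))
    (hinf : (σ, b) :: (G ++ [(σ, b')]) <:+: labelBlocks φ label e bs) :
    ∃ p, e ∣ p ∧ JLE e p ∧ label p (wordType φ b) = σ ∧
      p * wordType φ (((σ, b) :: G).flatMap Prod.snd) = p ∧
      JLE e (wordType φ (((σ, b) :: G).flatMap Prod.snd)) := by
  have block_equiv {y : M × List A} (hy : y ∈ (σ, b) :: (G ++ [(σ, b')])) :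
      JEquiv e (wordType φ y.2) :=
    hbs y.2 (snd_mem_of_mem_labelBlocks (hinf.subset hy))
  obtain ⟨F, F', hFF'⟩ := hinf
  have split_b : labelBlocks φ label e bs = F ++ (σ, b) :: (G ++ [(σ, b')] ++ F') := by
    simp [← hFF']
  have split_b' : labelBlocks φ label e bs = (F ++ (σ, b) :: G) ++ (σ, b') :: F' := by
    simp [← hFF']
  have hp := jle_mul_wordType_of_labelBlocks_eq hJ split_b
  have hpm := jle_mul_wordType_of_labelBlocks_eq hJ split_b'
  have label_b := eq_label_of_labelBlocks_eq split_b
  have label_b' := eq_label_of_labelBlocks_eq split_b'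
  rw [List.flatMap_append, wordType_append, ← mul_assoc] at hpm label_b'
  obtain ⟨hfix, -⟩ := hlabel.eq_and_dvd (dvd_mul_right e _) hp (block_equiv (by simp))
    ((dvd_mul_right e _).mul_right _) hpm (block_equiv (by simp)) (label_b.symm.trans label_b')
  exact ⟨_, dvd_mul_right e _, hp, label_b.symm, hfix.symm, hpm.trans (mul_jle_right _ _)⟩

theorem IsLabelling.coherent_labelBlocks [Finite M] (hlabel : IsLabelling e label)
    (he : IsIdempotentElem e) (hbs : ∀ b ∈ bs, JEquiv e (wordType φ b))
    (hJ : JLE e (e * wordType φ bs.flatten)) :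
    Coherent φ (3 * jRank e) (labelBlocks φ label e bs) := by
  intro σ
  by_cases hσ : ∃ b G b', (σ, b) :: (G ++ [(σ, b')]) <:+: labelBlocks φ label e bs
  swap
  · exact ⟨e, he, le_rfl, fun b G b' hinf => absurd ⟨b, G, b', hinf⟩ hσ⟩
  obtain ⟨b, G, b', hinf⟩ := hσ
  set m := wordType φ (((σ, b) :: G).flatMap Prod.snd) with hm
  have hb : JEquiv e (wordType φ b) :=
    hbs b (snd_mem_of_mem_labelBlocks (hinf.subset List.mem_cons_self))
  have b_dvd_m : wordType φ b ∣ m := by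
    rw [hm, List.flatMap_cons, wordType_append]
    exact dvd_mul_right _ _
  obtain ⟨p, hp, hep, hpσ, hpm, hem⟩ := hlabel.exists_stabilized hbs hJ hinf
  have hme : JLE m e := (jle_of_dvd b_dvd_m).trans hb.2
  refine ⟨m, mul_eq_left_of_stabilizer hpm (hme.trans hep) hpm,
    Nat.mul_le_mul_left 3 (jRank_le_jRank_of_jle hme), fun c G' c' hinf' => ?_⟩
  have hc : JEquiv e (wordType φ c) :=
    hbs c (snd_mem_of_mem_labelBlocks (hinf'.subset List.mem_cons_self))
  obtain ⟨p', hp', hep', hpσ', hpm', -⟩ := hlabel.exists_stabilized hbs hJ hinf'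
  obtain ⟨rfl, b_dvd_c⟩ := hlabel.eq_and_dvd hp hep hb hp' hep' hc (hpσ.trans hpσ'.symm)
  refine (eq_of_dvd_of_stabilizer hpm (hme.trans hep) hpm' ?_).symm
  calc m ∣ wordType φ b := (hb.2.trans hem).dvd_of_dvd b_dvd_m
    _ ∣ wordType φ c := b_dvd_c
    _ ∣ wordType φ (((σ, c) :: G').flatMap Prod.snd) := by
      rw [List.flatMap_cons, wordType_append]
      exact dvd_mul_right _ _

theorem IsLabelling.jEquiv_of_mem_labelBlocks {y : M × List A} (hlabel : IsLabelling e label)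
    (hbs : ∀ b ∈ bs, JEquiv e (wordType φ b)) (hJ : JLE e (e * wordType φ bs.flatten))
    (hy : y ∈ labelBlocks φ label e bs) : JEquiv e y.1 := by
  have hblock : JEquiv e (wordType φ y.2) := hbs y.2 (snd_mem_of_mem_labelBlocks hy)
  obtain ⟨F, G, hFG⟩ := List.append_of_mem hy
  rw [eq_label_of_labelBlocks_eq hFG]
  exact hlabel.jEquiv (dvd_mul_right e _) (jle_mul_wordType_of_labelBlocks_eq hJ hFG) hblock

end LabelBlocks

section Simon

variable [Finite M] {x : M}

theorem IsLabelling.ramseyan_append {label : M → M → M} {b z : List A} {bs : List (List A)}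
    (hlabel : IsLabelling x label) (hx : IsIdempotentElem x)
    (hbs : ∀ c ∈ b :: bs, JEquiv x (wordType φ c))
    (hJ : JLE x (x * wordType φ (b :: bs).flatten))
    (hR : ∀ c ∈ b :: bs, Ramseyan φ (3 * jDepth x + 1) c)
    (hz : z = [] ∨ Ramseyan φ (3 * jDepth x + 1) z) :
    Ramseyan φ (3 * jRank x) ((b :: bs).flatten ++ z) := by
  classical
  let σ := label x (wordType φ b)
  let s : Finset M := (Set.toFinite {y | JEquiv x y}).toFinset.erase σ
  have hclass (y : M × List A) (hy : y ∈ labelBlocks φ label x (b :: bs)) : JEquiv x y.1 :=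
    hlabel.jEquiv_of_mem_labelBlocks hbs hJ hy
  have hcard : jRank x = jDepth x + (s.card + 1) := by
    rw [jRank_eq_jDepth_add, Finset.card_erase_add_one, Set.ncard_eq_toFinset_card]
    simpa using hclass _ List.mem_cons_self
  have := (hlabel.coherent_labelBlocks hx hbs hJ).ramseyan_append (s := s)
    (fun y hy => hR _ (snd_mem_of_mem_labelBlocks hy))
    (fun y hy hne => by simpa [s] using ⟨hne, hclass y (List.mem_cons_of_mem _ hy)⟩)
    (by lia) hz
  have hword := flatMap_snd_labelBlocks (φ := φ) label x (b :: bs)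
  rw [labelBlocks] at hword
  rw [hword] at this
  exact this.mono (by lia)

theorem ramseyan_flatten_append {b c z : List A} {bs : List (List A)}
    (hbs : ∀ d ∈ b :: c :: bs, JEquiv x (wordType φ d))
    (hJ : JLE x (wordType φ (b :: c :: bs).flatten))
    (hR : ∀ d ∈ b :: c :: bs, Ramseyan φ (3 * jDepth x + 1) d)
    (hz : z = [] ∨ Ramseyan φ (3 * jDepth x + 1) z) :
    Ramseyan φ (3 * jRank x) ((b :: c :: bs).flatten ++ z) := by
  have hb : JEquiv x (wordType φ b) := hbs b (by simp)
  have hc : JEquiv x (wordType φ c) := hbs c (by simp)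
  have hbc : JLE x (wordType φ b * wordType φ c) := by
    simp only [List.flatten_cons, ← List.append_assoc, wordType_append] at hJ
    exact hJ.trans (mul_jle_left _ _)
  obtain ⟨e, he, b_dvd_e, heb⟩ :=
    exists_isIdempotentElem_mul_eq (hb.2.trans hbc) (hc.2.trans hb.1)
  have hex : JEquiv e x :=
    ⟨(jle_of_dvd b_dvd_e).trans hb.2, hb.1.trans (heb ▸ mul_jle_left e (wordType φ b))⟩
  have he_word : e * wordType φ (b :: c :: bs).flatten = wordType φ (b :: c :: bs).flatten := by
    rw [List.flatten_cons, wordType_append, ← mul_assoc, heb]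
  obtain ⟨label, hlabel⟩ := exists_isLabelling e
  have hrank : jRank e = jRank x :=
    (jRank_le_jRank_of_jle hex.2).antisymm (jRank_le_jRank_of_jle hex.1)
  have hdepth : jDepth e = jDepth x :=
    (jDepth_le_jDepth_of_jle hex.2).antisymm (jDepth_le_jDepth_of_jle hex.1)
  rw [← hdepth] at hR hz
  rw [← hrank]
  exact hlabel.ramseyan_append he (fun d hd => hex.trans (hbs d hd))
    (by rw [he_word]; exact hex.1.trans hJ) hR hz

theorem ramseyan_append_singleton {z : List A} {a : A} (hx : JLE x (φ a))
    (hz : z = [] ∨ JLT x (wordType φ z))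
    (ih : z ≠ [] → Ramseyan φ (3 * jRank (wordType φ z)) z) :
    Ramseyan φ (3 * jDepth x + 1) (z ++ [a]) := by
  have letter_le : 3 * jDepth (φ a) ≤ 3 * jDepth x :=
    Nat.mul_le_mul_left 3 (jDepth_le_jDepth_of_jle hx)
  rcases eq_or_ne z [] with rfl | hne
  · exact (Ramseyan.letter a).mono (by lia)
  · have hrank := jRank_le_jDepth_of_jlt (hz.resolve_left hne)
    have hpos := jDepth_lt_jRank (wordType φ z)
    exact ((ih hne).mono (by lia)).mul ((Ramseyan.letter a).mono (by lia))

theorem exists_block_factorization (v : List A) (hv : JLE x (wordType φ v))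
    (ih : ∀ z, z ≠ [] → JLT x (wordType φ z) → Ramseyan φ (3 * jRank (wordType φ z)) z) :
    ∃ (bs : List (List A)) (z : List A), v = bs.flatten ++ z ∧ (z = [] ∨ JLT x (wordType φ z)) ∧
      ∀ b ∈ bs, JEquiv x (wordType φ b) ∧ Ramseyan φ (3 * jDepth x + 1) b := by
  induction v using List.reverseRecOn with
  | nil => exact ⟨[], [], by simp⟩
  | append_singleton v a ihv =>
    obtain ⟨bs, z, rfl, hz, hbs⟩ := ihv (hv.trans (by
      rw [wordType_append]
      exact mul_jle_left _ _))
    have hza : JLE x (wordType φ (z ++ [a])) := by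
      rw [List.append_assoc, wordType_append] at hv
      exact hv.trans (mul_jle_right _ _)
    by_cases hlt : JLT x (wordType φ (z ++ [a]))
    · exact ⟨bs, z ++ [a], by simp, .inr hlt, hbs⟩
    have hequiv : JEquiv x (wordType φ (z ++ [a])) :=
      ⟨hza, not_not.1 fun h => hlt ⟨hza, h⟩⟩
    have hxa : JLE x (φ a) := by
      refine hza.trans ?_
      simpa [wordType] using mul_jle_right (wordType φ z) (φ a)
    refine ⟨bs ++ [z ++ [a]], [], by simp, .inl rfl, fun b hb => ?_⟩
    rcases List.mem_append.1 hb with hb | hb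
    · exact hbs b hb
    · obtain rfl := List.mem_singleton.1 hb
      exact ⟨hequiv, ramseyan_append_singleton hxa hz fun hne => ih z hne (hz.resolve_left hne)⟩

/-- Simon's factorization forest theorem for weighted trees. -/
theorem ramseyan_three_mul_jRank (w : List A) (hw : w ≠ []) :
    Ramseyan φ (3 * jRank (wordType φ w)) w := by
  induction hn : jRank (wordType φ w) using Nat.strong_induction_on generalizing w with
  | _ n ih =>
  subst hn
  have depth_lt := jDepth_lt_jRank (wordType φ w)
  have ramseyan_of_jlt (z : List A) (hz : z ≠ []) (hlt : JLT (wordType φ w) (wordType φ z)) :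
      Ramseyan φ (3 * jRank (wordType φ z)) z :=
    ih _ ((jRank_le_jDepth_of_jlt hlt).trans_lt depth_lt) z hz rfl
  obtain ⟨bs, z, hwz, hz, hbs⟩ := exists_block_factorization w (.refl _) ramseyan_of_jlt
  have hz' : z = [] ∨ Ramseyan φ (3 * jDepth (wordType φ w) + 1) z := by
    refine or_iff_not_imp_left.2 fun hne => ?_
    have hlt := hz.resolve_left hne
    have := jRank_le_jDepth_of_jlt hlt
    exact (ramseyan_of_jlt z hne hlt).mono (by lia)
  match bs with
  | [] =>
    obtain rfl : w = z := hwz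
    exact absurd (JLE.refl _) (hz.resolve_left hw).2
  | [b] =>
    obtain rfl : w = b ++ z := by simpa using hwz
    have hb := (hbs b List.mem_cons_self).2
    exact ((Ramseyan.append_eq_nil_or (.inr hb) hz').resolve_left hw).mono (by lia)
  | b :: c :: bs =>
    have hJ : JLE (wordType φ w) (wordType φ (b :: c :: bs).flatten) := by
      nth_rw 1 [hwz]
      rw [wordType_append]
      exact mul_jle_left _ _
    nth_rw 2 [hwz]
    exact ramseyan_flatten_append (fun d hd => (hbs d hd).1) hJ (fun d hd => (hbs d hd).2) hz'

end Simon

end Ramseyan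

/-! ### Reduced lists of light trees -/

namespace DTree

variable {A M : Type*} {l : List (DTree A M)}

theorem wordList_eq_flatMap (l : List (DTree A M)) : wordList l = l.flatMap word := by
  induction l with
  | nil => rw [wordList, List.flatMap_nil]
  | cons T l ih => rw [wordList, ih, List.flatMap_cons]

theorem heightList_le {h : ℕ} (hl : ∀ T ∈ l, T.height ≤ h) : heightList l ≤ h := by
  induction l with
  | nil => simp [heightList]
  | cons T l ih =>
    rw [List.forall_mem_cons] at hl
    rw [heightList]
    exact max_le hl.1 (ih hl.2)

variable [Monoid M] {φ : A → M} {sharp : M → M} {k : ℕ}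

/-- A decomposition tree is light if it is so low that it can replace a leaf of its type in the
weighted trees of `Ramseyan`. -/
structure IsLight (φ : A → M) (sharp : M → M) (k : ℕ) (T : DTree A M) : Prop where
  valid : Valid φ sharp k T
  height_le : T.height ≤ max 1 (3 * jDepth (T.typ φ sharp))

/-- A list of light trees is reduced if no two or more consecutive trees can be merged into a single
light tree. -/
structure IsReduced (φ : A → M) (sharp : M → M) (k : ℕ) (l : List (DTree A M)) : Prop where
  isLight : ∀ T ∈ l, IsLight φ sharp k T
  not_isLight : ∀ u, u <:+: l → 2 ≤ u.length → ∀ T : DTree A M, T.word = u.flatMap word →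
    ¬ IsLight φ sharp k T

theorem exists_isReduced_of_isLight (l : List (DTree A M)) (hl : ∀ T ∈ l, IsLight φ sharp k T) :
    ∃ l', IsReduced φ sharp k l' ∧ l'.flatMap word = l.flatMap word := by
  induction hn : l.length using Nat.strong_induction_on generalizing l with
  | _ n ih =>
  by_cases hred : IsReduced φ sharp k l
  · exact ⟨l, hred, rfl⟩
  obtain ⟨u, ⟨s, t, rfl⟩, hlen, T, hT, hlight⟩ : ∃ u, u <:+: l ∧ 2 ≤ u.length ∧
      ∃ T : DTree A M, T.word = u.flatMap word ∧ IsLight φ sharp k T := by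
    by_contra! hmerge
    exact hred ⟨hl, hmerge⟩
  have merged_light : ∀ T' ∈ s ++ T :: t, IsLight φ sharp k T' := by
    simp only [List.mem_append, List.mem_cons] at hl ⊢
    grind
  have merged_shorter : (s ++ T :: t).length < n := by
    simp only [List.length_append, List.length_cons] at hn ⊢
    lia
  obtain ⟨l', hl', hword⟩ := ih _ merged_shorter (s ++ T :: t) merged_light rfl
  exact ⟨l', hl', by simp [hword, hT]⟩

theorem exists_isReduced (φ : A → M) (sharp : M → M) (k : ℕ) (w : List A) :
    ∃ l, IsReduced φ sharp k l ∧ l.flatMap word = w := by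
  have leaves_light : ∀ T ∈ w.map leaf, IsLight φ sharp k T := by
    simp only [List.mem_map, forall_exists_index, and_imp, forall_apply_eq_imp_iff₂]
    exact fun a _ => ⟨.leaf a, by simp [height]⟩
  obtain ⟨l, hl, hword⟩ := exists_isReduced_of_isLight _ leaves_light
  exact ⟨l, hl, by simp [hword, List.flatMap_map, word]⟩

/-- `T` is a decomposition tree of height at most `h` whose word and type are those of the list of
trees `u`. -/
structure Merges (φ : A → M) (sharp : M → M) (k h : ℕ) (u : List (DTree A M)) (T : DTree A M) :
    Prop where
  valid : Valid φ sharp k T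
  word_eq : T.word = u.flatMap word
  typ_eq : T.typ φ sharp = wordType (typ φ sharp) u
  height_le : T.height ≤ h

theorem IsReduced.exists_merges_flatten [Finite M] {h : ℕ} {e : M} {us : List (List (DTree A M))}
    (hl : IsReduced φ sharp k l)
    (hsharp : ∀ E : M, E * E = E → sharp E ≠ E → JLT (sharp E) E) (hinf : us.flatten <:+: l)
    (hlen : 2 ≤ us.flatten.length) (hmerges : ∀ u ∈ us, ∃ T, Merges φ sharp k h u T)
    (he : IsIdempotentElem e) (hh : h + 1 ≤ 3 * jRank e)
    (hus : ∀ u ∈ us, wordType (typ φ sharp) u = e) :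
    ∃ T, Merges φ sharp k (h + 1) us.flatten T := by
  have hne : us ≠ [] := by
    rintro rfl
    simp at hlen
  have : Nonempty (DTree A M) := ⟨idem e []⟩
  choose! f hf using hmerges
  have children_valid : ∀ c ∈ us.map f, Valid φ sharp k c := by
    simpa using fun u hu => (hf u hu).valid
  have children_typ : ∀ c ∈ us.map f, typ φ sharp c = e := by
    simpa using fun u hu => (hf u hu).typ_eq.trans (hus u hu)
  have children_height : heightList (us.map f) + 1 ≤ h + 1 :=
    Nat.succ_le_succ (heightList_le (by simpa using fun u hu => (hf u hu).height_le))
  have children_word : wordList (us.map f) = us.flatten.flatMap word := by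
    rw [wordList_eq_flatMap, List.flatMap_map, ← List.flatMap_id, List.flatMap_assoc]
    exact List.flatMap_congr fun u hu => (hf u hu).word_eq
  have flatten_typ := wordType_flatten_of_isIdempotentElem he hne hus
  by_cases hk : us.length < k
  · exact ⟨idem e (us.map f), .idem (by simpa using hne) (by simpa using hk) he children_valid
      children_typ, by rw [word, children_word], flatten_typ.symm, by rwa [height]⟩
  have iter_valid : Valid φ sharp k (iter e (us.map f)) :=
    .iter (by simpa using hk) he children_valid children_typ
  have iter_word : (iter e (us.map f)).word = us.flatten.flatMap word := by
    rw [word, children_word]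
  rcases eq_or_ne (sharp e) e with hfix | hne_sharp
  · exact ⟨iter e (us.map f), iter_valid, iter_word, hfix.trans flatten_typ.symm, by rwa [height]⟩
  refine absurd ⟨iter_valid, ?_⟩ (hl.not_isLight _ hinf hlen _ iter_word)
  have hdepth : jRank e ≤ jDepth (sharp e) := jRank_le_jDepth_of_jlt (hsharp e he hne_sharp)
  rw [height, typ]
  lia

theorem IsReduced.exists_merges [Finite M] {h : ℕ} {u : List (DTree A M)}
    (hl : IsReduced φ sharp k l)
    (hsharp : ∀ E : M, E * E = E → sharp E ≠ E → JLT (sharp E) E)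
    (hu : Ramseyan (typ φ sharp) h u) (hinf : u <:+: l) : ∃ T, Merges φ sharp k h u T := by
  induction hu with
  | letter T =>
    have hT := hl.isLight T (hinf.subset List.mem_cons_self)
    exact ⟨T, hT.valid, by simp, by simp [wordType], hT.height_le⟩
  | @mul h u v _ _ ihu ihv =>
    obtain ⟨T, hT⟩ := ihu ((List.prefix_append u v).isInfix.trans hinf)
    obtain ⟨T', hT'⟩ := ihv ((List.suffix_append u v).isInfix.trans hinf)
    refine ⟨prod T T', .prod hT.valid hT'.valid, ?_, ?_, ?_⟩
    · rw [word, hT.word_eq, hT'.word_eq, List.flatMap_append]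
    · rw [typ, hT.typ_eq, hT'.typ_eq, wordType_append]
    · rw [height]
      exact Nat.succ_le_succ (max_le hT.height_le hT'.height_le)
  | @idem h e us he hh hne hR hus ih =>
    have hmerges := fun u hu => ih u hu ((List.infix_of_mem_flatten hu).trans hinf)
    match us with
    | [] => exact absurd rfl hne
    | [u] =>
      obtain ⟨T, hvalid, hword, htyp, hheight⟩ := hmerges u List.mem_cons_self
      exact ⟨T, hvalid, by simpa using hword, by simpa using htyp, hheight.trans h.le_succ⟩
    | u :: v :: us =>
      have hu := List.length_pos_iff.2 (hR u (by simp)).ne_nil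
      have hv := List.length_pos_iff.2 (hR v (by simp)).ne_nil
      exact hl.exists_merges_flatten hsharp hinf
        (by simp only [List.flatten_cons, List.length_append]; lia) hmerges he hh hus
  | mono hle _ ih =>
    obtain ⟨T, hT⟩ := ih hinf
    exact ⟨T, hT.valid, hT.word_eq, hT.typ_eq, hT.height_le.trans hle⟩

end DTree

theorem k_decomposition_tree_exists_general {A M : Type*} [Monoid M] [Finite M]
    (φ : A → M) (sharp : M → M)
    (h_J_decrease : ∀ E : M, E * E = E → sharp E ≠ E → JLT (sharp E) E)
    (w : List A) (hw : w ≠ []) (k : ℕ) :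
    ∃ T : DTree A M, DTree.Valid φ sharp k T ∧ T.word = w ∧ T.height ≤ 3 * Nat.card M := by
  obtain ⟨l, hl, rfl⟩ := DTree.exists_isReduced φ sharp k w
  have hne : l ≠ [] := by
    rintro rfl
    exact hw rfl
  obtain ⟨T, hT⟩ := hl.exists_merges h_J_decrease (ramseyan_three_mul_jRank l hne) List.infix_rfl
  exact ⟨T, hT.valid, hT.word_eq,
    hT.height_le.trans (Nat.mul_le_mul_left 3 (jRank_le_card _))⟩

theorem k_decomposition_tree_exists {A M : Type*} [Monoid M] [Fintype M]
    (φ : A → M) (sharp : M → M)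
    (h_idem : ∀ E : M, E * E = E → sharp E * sharp E = sharp E)
    (h_sharp_sharp : ∀ E : M, E * E = E → sharp (sharp E) = sharp E)
    (h_abs_left : ∀ E : M, E * E = E → E * sharp E = sharp E)
    (h_abs_right : ∀ E : M, E * E = E → sharp E * E = sharp E)
    (h_J_decrease : ∀ E : M, E * E = E → sharp E ≠ E →
      {x : M | ∃ m m' : M, x = m * sharp E * m'} ⊆ {x : M | ∃ m m' : M, x = m * E * m'} ∧
      {x : M | ∃ m m' : M, x = m * sharp E * m'} ≠ {x : M | ∃ m m' : M, x = m * E * m'}) :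
    ∀ w : List A, w ≠ [] → ∀ k : ℕ, k > 3 →
      ∃ T : DTree A M, DTree.Valid φ sharp k T ∧ T.word = w ∧
        T.height ≤ 3 * (Fintype.card M) ^ 2 := by
  intro w hw k _
  have h_jlt (E : M) (hE : E * E = E) (hne : sharp E ≠ E) : JLT (sharp E) E :=
    jlt_of_ideal_ssubset ((h_J_decrease E hE hne).1.ssubset_of_ne (h_J_decrease E hE hne).2)
  obtain ⟨T, hvalid, hword, hheight⟩ := k_decomposition_tree_exists_general φ sharp h_jlt w hw k
  refine ⟨T, hvalid, hword, hheight.trans ?_⟩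
  rw [Nat.card_eq_fintype_card]
  exact Nat.mul_le_mul_left 3 (Nat.le_self_pow two_ne_zero _)
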